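/- arXiv:1107.0557 — 5 statements merged into one kernel-verified Lean document; each statement's English description precedes it below -/
import Mathlib

section
/- Let R be a ring and M a right R-module. The functor Ext¹_R(M, −) commutes with all inverse limits (i.e., for every inverse system of R-modules the canonical map Ext¹_R(M, lim M_i) → lim Ext¹_R(M, M_i) is an isomorphism) if and only if M is projective. -/
open CategoryTheory CategoryTheory.Limits Opposite

noncomputable section

/-- The category of right `R`-modules. -/
abbrev RMod (R : Type) [Ring R] := ModuleCat.{0} Rᵐᵒᵖ

/-- `R` as a right module over itself. -/
abbrev regR (R : Type) [Ring R] : RMod R := ModuleCat.of Rᵐᵒᵖ R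

/-- The covariant functor `Ext¹_R(M, -)` (more generally `Extⁿ_R(M, -)`). -/
abbrev extFun (R : Type) [Ring R] (n : ℕ) (M : RMod R) : RMod R ⥤ ModuleCat ℤ :=
  (Ext ℤ (RMod R) n).obj (op M)

/-- `Ext¹_R(M,-)` commutes with direct limits (direct systems over directed sets). -/
def CommutesWithDirectLimits (R : Type) [Ring R] (M : RMod R) : Prop :=
  ∀ (J : Type) [Preorder J] [IsDirected J (· ≤ ·)] [Nonempty J],
    PreservesColimitsOfShape J (extFun R 1 M)

/-- `Ext¹_R(M,-)` commutes with direct sums. -/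
def CommutesWithDirectSums (R : Type) [Ring R] (M : RMod R) : Prop :=
  ∀ (ι : Type), PreservesColimitsOfShape (Discrete ι) (extFun R 1 M)

/-- `Extⁿ_R(M,-)` commutes with direct sums of copies of `R`: the canonical map
`Extⁿ_R(M,R)^{(ι)} → Extⁿ_R(M,R^{(ι)})` is an isomorphism for every index set `ι`. -/
def CommutesWithSumsOfR (R : Type) [Ring R] (n : ℕ) (M : RMod R) : Prop :=
  ∀ (ι : Type), IsIso (Sigma.desc
    (fun i : ι => (extFun R n M).map (Sigma.ι (fun _ : ι => regR R) i)))

/-- A module `K` is small iff `Hom_R(K,-)` commutes with direct sums. -/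
def IsSmallModule (R : Type) [Ring R] (K : RMod R) : Prop :=
  ∀ (ι : Type), PreservesColimitsOfShape (Discrete ι) (preadditiveCoyoneda.obj (op K))

/-- `M` has a short exact sequence `0 → K → P → M → 0` with `P` projective and `K`
satisfying the property `Q` (e.g. `M` is fp-Ω¹, fg-Ω¹ or small-Ω¹). -/
def IsOmega1 (R : Type) [Ring R] (Q : RMod R → Prop) (M : RMod R) : Prop :=
  ∃ (K P : RMod R) (i : K ⟶ P) (p : P ⟶ M) (w : i ≫ p = 0),
    Mono i ∧ Epi p ∧ (ShortComplex.mk i p w).Exact ∧ Projective P ∧ Q K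

/-- `M` has projective dimension at most 1. -/
def HasProjDimLE1 (R : Type) [Ring R] (M : RMod R) : Prop :=
  ∃ (P₁ P₀ : RMod R) (f : P₁ ⟶ P₀) (p : P₀ ⟶ M) (w : f ≫ p = 0),
    Projective P₁ ∧ Projective P₀ ∧ Mono f ∧ Epi p ∧ (ShortComplex.mk f p w).Exact

/-- `M` is `FP₂`: it admits a projective resolution which is finitely generated in
dimensions `0`, `1` and `2`. -/
def IsFP2 (R : Type) [Ring R] (M : RMod R) : Prop :=
  ∃ (P₂ P₁ P₀ : RMod R) (d₂ : P₂ ⟶ P₁) (d₁ : P₁ ⟶ P₀) (p : P₀ ⟶ M)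
    (w₂ : d₂ ≫ d₁ = 0) (w₁ : d₁ ≫ p = 0),
    Projective P₂ ∧ Projective P₁ ∧ Projective P₀ ∧
    Module.Finite Rᵐᵒᵖ P₂ ∧ Module.Finite Rᵐᵒᵖ P₁ ∧ Module.Finite Rᵐᵒᵖ P₀ ∧
    Epi p ∧ (ShortComplex.mk d₂ d₁ w₂).Exact ∧ (ShortComplex.mk d₁ p w₁).Exact

/-- `M` has injective dimension at most `n`, i.e. `Ext^k(-,M)` vanishes for `k > n`. -/
def HasInjDimLE (R : Type) [Ring R] (n : ℕ) (M : RMod R) : Prop :=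
  ∀ (k : ℕ), n < k → ∀ (N : RMod R), IsZero (((Ext ℤ (RMod R) k).obj (op N)).obj M)

universe u

open Cardinal in
/-- Given `f : E → F` and a set `S` of indices, the module of pairs `(x, y)`, where `x : E` and
`y : X → F` has support of cardinality at most `κ`, such that `y i = f x` for `i ∈ S`. -/
def smallSupportGraph {A E F : Type*} {X : Type u} [Ring A] [AddCommGroup E] [Module A E]
    [AddCommGroup F] [Module A F] (f : E →ₗ[A] F) (κ : Cardinal.{u}) (hκ : ℵ₀ ≤ κ) (S : Set X) :
    Submodule A (E × (X → F)) where
  carrier := {p | #(Function.support p.2) ≤ κ ∧ ∀ i ∈ S, p.2 i = f p.1}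
  add_mem' {p q} hp hq :=
    ⟨(mk_le_mk_of_subset (Function.support_add p.2 q.2)).trans <| (mk_union_le _ _).trans <|
      add_le_of_le hκ hp.1 hq.1, fun i hi => by simp [hp.2 i hi, hq.2 i hi]⟩
  zero_mem' := by simp
  smul_mem' a p hp :=
    ⟨(mk_le_mk_of_subset (Function.support_const_smul_subset a p.2)).trans hp.1,
      fun i hi => by simp [hp.2 i hi]⟩

open Cardinal in
lemma smallSupportGraph_anti {A E F : Type*} {X : Type u} [Ring A] [AddCommGroup E] [Module A E]
    [AddCommGroup F] [Module A F] (f : E →ₗ[A] F) (κ : Cardinal.{u}) (hκ : ℵ₀ ≤ κ) :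
    Antitone (smallSupportGraph (X := X) f κ hκ) :=
  fun _ _ hST _ hp => ⟨hp.1, fun i hi => hp.2 i (hST hi)⟩

open Cardinal in
/-- If `κ` is an infinite cardinal bounding the cardinality of the ring and of `S`, and `E`, `F` are
injective, then so is `smallSupportGraph f κ hκ S`. -/
lemma baer_smallSupportGraph {A X : Type u} {E F : Type*} [Ring A] [AddCommGroup E] [Module A E]
    [AddCommGroup F] [Module A F] (hE : Module.Baer A E) (hF : Module.Baer A F)
    (f : E →ₗ[A] F) (κ : Cardinal.{u}) (hκ : ℵ₀ ≤ κ) (hA : #A ≤ κ) (S : Set X) (hS : #S ≤ κ) :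
    Module.Baer A (smallSupportGraph f κ hκ S) := by
  classical
  intro I g
  obtain ⟨h₀, hh₀⟩ := hE I (LinearMap.fst A E (X → F) ∘ₗ Submodule.subtype _ ∘ₗ g)
  choose k hk using fun i : X => hF I
    (LinearMap.proj i ∘ₗ LinearMap.snd A E (X → F) ∘ₗ Submodule.subtype _ ∘ₗ g)
  let T : Set X := ⋃ a : I, Function.support (g a).1.2
  have hT : #T ≤ κ := (mk_iUnion_le _).trans <|
    mul_le_of_le hκ ((mk_subtype_le _).trans hA) (ciSup_le' fun a => (g a).2.1)
  let h : A →ₗ[A] X → F :=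
    LinearMap.pi fun i => if i ∈ S then f ∘ₗ h₀ else if i ∈ T then k i else 0
  have hsupp (a : A) : Function.support (h a) ⊆ S ∪ T := by
    intro i hi
    by_contra hST
    rw [Set.mem_union, not_or] at hST
    exact hi (by simp [h, hST.1, hST.2])
  refine ⟨(h₀.prod h).codRestrict _ fun a =>
    ⟨(mk_le_mk_of_subset (hsupp a)).trans <| (mk_union_le _ _).trans <| add_le_of_le hκ hS hT,
      fun i hi => by simp [h, hi]⟩, fun a ha => Subtype.ext <| Prod.ext (hh₀ a ha) ?_⟩
  funext i
  change h a i = (g ⟨a, ha⟩).1.2 i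
  have hga : h₀ a = (g ⟨a, ha⟩).1.1 := hh₀ a ha
  by_cases hiS : i ∈ S
  · simp [h, hiS, hga, (g ⟨a, ha⟩).2.2 i hiS]
  by_cases hiT : i ∈ T
  · simpa [h, hiS, hiT] using hk i a ha
  · have : (g ⟨a, ha⟩).1.2 i = 0 := by
      by_contra hne
      exact hiT (Set.mem_iUnion.2 ⟨⟨a, ha⟩, hne⟩)
    simp [h, hiS, hiT, this]

open Cardinal in
/-- Every module is the inverse limit of a downward directed system of injective modules. -/
theorem ModuleCat.exists_isLimit_of_injective {A : Type u} [Ring A] (N : ModuleCat.{u} A) :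
    ∃ (X : Type u) (G : (Finset X)ᵒᵈ ⥤ ModuleCat.{u} A) (c : Cone G),
      (∀ S, CategoryTheory.Injective (G.obj S)) ∧ Nonempty (IsLimit c) ∧ c.pt = N := by
  let Q := InjectiveResolution.of N
  let E := Q.cocomplex.X 0
  let F := Q.cocomplex.X 1
  let j : N ⟶ E := Q.ι.f 0
  let f : E ⟶ F := Q.cocomplex.d 0 1
  have hjf : j ≫ f = 0 := Q.ι_f_zero_comp_complex_d
  have hex : (ShortComplex.mk j f hjf).Exact := Q.exact₀
  have : Mono (ShortComplex.mk j f hjf).f := inferInstanceAs (Mono (Q.ι.f 0))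
  have hE : Module.Baer A E := Module.Baer.iff_injective.2 <|
    (Module.injective_iff_injective_object A E).2 (Q.injective 0)
  have hF : Module.Baer A F := Module.Baer.iff_injective.2 <|
    (Module.injective_iff_injective_object A F).2 (Q.injective 1)
  let κ : Cardinal.{u} := #(A ⊕ ULift.{u} ℕ)
  have hκ : ℵ₀ ≤ κ := by simp [κ]
  have hA : #A ≤ κ := by simp [κ]
  let X := Set (A ⊕ ULift.{u} ℕ)
  have hX : κ < #X := by simpa [κ, X] using cantor κ
  let I (S : (Finset X)ᵒᵈ) := smallSupportGraph f.hom κ hκ (S.ofDual : Set X)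
  have hI : Monotone I := fun S T hST =>
    smallSupportGraph_anti f.hom κ hκ (Finset.coe_subset.2 hST)
  let G : (Finset X)ᵒᵈ ⥤ ModuleCat.{u} A :=
    { obj S := ModuleCat.of A (I S)
      map φ := ModuleCat.ofHom (Submodule.inclusion (hI (leOfHom φ))) }
  have hj (n : N) : f.hom (j.hom n) = 0 := congr($hjf n)
  let c : Cone G :=
    { pt := N
      π := { app S := ModuleCat.ofHom <|
              (LinearMap.inl A E (X → F) ∘ₗ j.hom).codRestrict (I S) fun n =>
                ⟨by simp, fun i _ => by simp [hj]⟩ } }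
  have inj (S) : CategoryTheory.Injective (G.obj S) :=
    (Module.injective_iff_injective_object A (I S)).1 <|
      (baer_smallSupportGraph hE hF f.hom κ hκ hA _
        ((Cardinal.lt_aleph0_of_finite _).le.trans hκ)).injective
  -- every cone factors through the intersection of all `I S`, which is the kernel of `f`
  let p (s : Cone G) (S) (x : s.pt) : E × (X → F) := ((s.π.app S).hom x : I S).1
  have hp (s : Cone G) (S T) (x : s.pt) : p s S x = p s T x := by
    have key (S T) (hST : S ≤ T) : p s S x = p s T x := by
      have := congr($(s.w (homOfLE hST)) x)
      exact congr_arg Subtype.val this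
    exact (key S (.toDual ∅) (Finset.empty_subset _)).trans
      (key T (.toDual ∅) (Finset.empty_subset _)).symm
  have hpf (s : Cone G) (S) (x : s.pt) (i : X) : (p s S x).2 i = f.hom (p s S x).1 := by
    rw [hp s S (.toDual {i})]
    exact ((s.π.app (.toDual {i})).hom x : I _).2.2 i (by simp)
  have hp0 (s : Cone G) (S) (x : s.pt) : f.hom (p s S x).1 = 0 := by
    by_contra hne
    have hs : Function.support (p s S x).2 = Set.univ := by
      ext i
      simp [hpf, hne]
    have := ((s.π.app S).hom x : I S).2.1
    change #(Function.support (p s S x).2) ≤ κ at this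
    rw [hs, mk_univ] at this
    exact this.not_gt hX
  let q (s : Cone G) : s.pt ⟶ E := ModuleCat.ofHom
    (LinearMap.fst A E (X → F) ∘ₗ (I (.toDual ∅)).subtype ∘ₗ (s.π.app (.toDual ∅)).hom)
  have hq (s : Cone G) : q s ≫ f = 0 := by
    ext x
    exact hp0 s _ x
  refine ⟨X, G, c, inj, ⟨?_⟩, rfl⟩
  exact
    { lift s := hex.lift (q s) (hq s)
      fac s S := by
        refine ModuleCat.hom_ext (LinearMap.ext fun x => ?_)
        have h1 : j.hom ((hex.lift (q s) (hq s)).hom x) = (p s (.toDual ∅) x).1 :=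
          congr($(hex.lift_f (q s) (hq s)) x)
        have h2 : (j.hom ((hex.lift (q s) (hq s)).hom x), (0 : X → F)) = p s S x :=
          Prod.ext (h1.trans congr(($(hp s _ S x)).1))
            (funext fun i => ((hpf s S x i).trans (hp0 s S x)).symm)
        exact Subtype.ext h2
      uniq s m hm := by
        rw [← cancel_mono (ShortComplex.mk j f hjf).f, hex.lift_f]
        ext x
        have := congr($(hm (.toDual ∅)) x)
        exact congr_arg (fun z : I (.toDual ∅) => z.1.1) this }

section

variable {k : Type*} [Ring k] {C : Type*} [Category* C] [Abelian C] [Linear k C]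
  [EnoughProjectives C]

lemma isZero_ext_one_iff {M : C} (P : ProjectiveResolution M) (N : C) :
    IsZero (((Ext k C 1).obj (op M)).obj N) ↔
      ∀ φ : P.complex.X 1 ⟶ N, P.complex.d 2 1 ≫ φ = 0 →
        ∃ ψ : P.complex.X 0 ⟶ N, P.complex.d 1 0 ≫ ψ = φ := by
  rw [(P.isoExt (R := k) 1 N).isZero_iff, ← HomologicalComplex.exactAt_iff_isZero_homology,
    HomologicalComplex.exactAt_iff' _ 0 1 2 (by simp) (by simp), ShortComplex.moduleCat_exact_iff]
  rfl

lemma isZero_ext_one_of_injective (M N : C) [CategoryTheory.Injective N] :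
    IsZero (((Ext k C 1).obj (op M)).obj N) := by
  let P := ProjectiveResolution.of M
  rw [isZero_ext_one_iff P]
  exact fun φ hφ => ⟨(P.exact_succ 0).descToInjective φ hφ,
    (P.exact_succ 0).comp_descToInjective _ _⟩

lemma projective_of_isZero_ext_one {M : C}
    (h : ∀ N : C, IsZero (((Ext k C 1).obj (op M)).obj N)) : Projective M := by
  let P := ProjectiveResolution.of M
  let S := ShortComplex.mk _ _ P.complex_d_comp_π_f_zero
  have hS : S.Exact := P.exact₀
  let i := kernel.ι (P.π.f 0)
  let e : P.complex.X 1 ⟶ kernel (P.π.f 0) := kernel.lift _ _ P.complex_d_comp_π_f_zero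
  have : Epi e := hS.epi_kernelLift
  have he : e ≫ i = P.complex.d 1 0 := kernel.lift_ι _ _ _
  obtain ⟨ψ, hψ⟩ := (isZero_ext_one_iff P _).1 (h (kernel (P.π.f 0))) e <| by
    rw [← cancel_mono i, Category.assoc, he, zero_comp, P.complex.d_comp_d]
  have hr : i ≫ ψ = 𝟙 _ := by
    rw [← cancel_epi e, ← Category.assoc, he, hψ, Category.comp_id]
  let T := ShortComplex.mk i (P.π.f 0) (kernel.condition _)
  have hT : T.ShortExact :=
    { exact := ShortComplex.exact_kernel _
      mono_f := inferInstanceAs (Mono i)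
      epi_g := inferInstanceAs (Epi (P.π.f 0)) }
  let σ := ShortComplex.Splitting.ofExactOfRetraction T hT.exact ψ hr hT.epi_g
  exact Retract.projective ⟨σ.s, T.g, σ.s_g⟩

end

theorem ext1_commutes_with_inverse_limits_iff_projective
    (R : Type) [Ring R] (M : RMod R) :
    (∀ (J : Type) [Preorder J] [IsDirected J (· ≥ ·)] [Nonempty J],
      PreservesLimitsOfShape J (extFun R 1 M)) ↔ Projective M := by
  refine ⟨fun h => projective_of_isZero_ext_one (k := ℤ) fun N => ?_, fun _ J _ _ _ => ?_⟩
  · obtain ⟨X, G, c, hG, ⟨hc⟩, rfl⟩ := ModuleCat.exists_isLimit_of_injective N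
    have := h (Finset X)ᵒᵈ
    refine (isLimitOfPreserves (extFun R 1 M) hc).isZero_pt (Functor.isZero _ fun S => ?_)
    exact isZero_ext_one_of_injective M (G.obj S)
  · exact Functor.preservesLimitsOfShape_of_isZero _
      (Functor.isZero _ fun N => isZero_Ext_succ_of_projective M N 0) J
end
end

section
/- Let M be a right R-module of injective dimension at most n ≥ 1. The functor Extⁿ_R(−, M) inverts countable products (i.e., for every countable family (M_i)_{i<ω} of right R-modules the canonical homomorphism ⨁_{i<ω} Extⁿ_R(M_i, M) → Extⁿ_R(∏_{i<ω} M_i, M) is an isomorphism) if and only if M has injective dimension at most n − 1. -/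
open CategoryTheory CategoryTheory.Limits Opposite

noncomputable section

namespace CategoryTheory.ProjectiveResolution

variable {A : Type*} [Ring A] {C : Type*} [Category* C] [Abelian C] [Linear A C]

variable (A) in
/-- The map of cochain complexes induced by a morphism of chain complexes. -/
def linearYonedaMap {K L : ChainComplex C ℕ} (φ : K ⟶ L) (M : C) :
    L.linearYonedaObj A M ⟶ K.linearYonedaObj A M :=
  (HomologicalComplex.unopFunctor _ _).map
    (((((linearYoneda A C).obj M).rightOp.mapHomologicalComplex _).map φ).op)

lemma linearYonedaMap_f {K L : ChainComplex C ℕ} (φ : K ⟶ L) (M : C) (n : ℕ) (f : L.X n ⟶ M) :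
    (linearYonedaMap A φ M).f n f = φ.f n ≫ f := rfl

lemma unop_comp_inv_unop_comp_inv_unop {D : Type*} [Category* D] {X Y X' Y' : Dᵒᵖ} {Z Z' : D}
    (i : X ≅ X') (j : Y ≅ Y') (a : X' ≅ op Z) (b : Y' ≅ op Z') (m : Z' ⟶ Z)
    {f : X ⟶ Y} {f' : X' ⟶ Y'} (h : i.inv ≫ f = f' ≫ j.inv) (h' : f' ≫ b.hom = a.hom ≫ m.op) :
    f.unop ≫ i.inv.unop ≫ a.inv.unop = (j.inv.unop ≫ b.inv.unop) ≫ m := by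
  apply Quiver.Hom.op_inj
  have : a.inv ≫ f' = m.op ≫ b.inv := by
    rw [Iso.inv_comp_eq, ← Category.assoc, Iso.eq_comp_inv, h']
  simp [h, reassoc_of% this]

variable [EnoughProjectives C]

lemma isoExt_hom_naturality {X Y : C} (g : X ⟶ Y) (P : ProjectiveResolution X)
    (Q : ProjectiveResolution Y) (φ : P.complex ⟶ Q.complex)
    (comm : φ.f 0 ≫ Q.π.f 0 = P.π.f 0 ≫ g) (n : ℕ) (M : C) :
    ((Ext A C n).map g.op).app M ≫ (P.isoExt n M).hom =
      (Q.isoExt n M).hom ≫ HomologicalComplex.homologyMap (linearYonedaMap A φ M) n := by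
  exact unop_comp_inv_unop_comp_inv_unop _ _ _ _ _
    (isoLeftDerivedObj_inv_naturality g P Q φ comm ((linearYoneda A C).obj M).rightOp n)
    (HomologicalComplex.homologyOp_hom_naturality (linearYonedaMap A φ M) n)

variable (A) in
/-- `P.Represents A f x` means that the cocycle `f : P.complex.X n ⟶ M` represents the
class `x` in `Extⁿ(X, M)`. -/
def Represents {X : C} (P : ProjectiveResolution X) {n : ℕ} {M : C} (f : P.complex.X n ⟶ M)
    (x : ((Ext A C n).obj (op X)).obj M) : Prop :=
  ∃ c : (P.complex.linearYonedaObj A M).cycles n,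
    (P.complex.linearYonedaObj A M).iCycles n c = f ∧
    (P.complex.linearYonedaObj A M).homologyπ n c = (P.isoExt n M).hom x

variable {X Y : C} (P : ProjectiveResolution X) (Q : ProjectiveResolution Y) {n : ℕ} {M : C}

lemma exists_represents (x : ((Ext A C n).obj (op X)).obj M) :
    ∃ f : P.complex.X n ⟶ M, P.complex.d (n + 1) n ≫ f = 0 ∧ P.Represents A f x := by
  obtain ⟨c, hc⟩ := (ModuleCat.epi_iff_surjective
    ((P.complex.linearYonedaObj A M).homologyπ n)).1 inferInstance ((P.isoExt n M).hom x)
  refine ⟨(P.complex.linearYonedaObj A M).iCycles n c, ?_, c, rfl, hc⟩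
  exact congr($((P.complex.linearYonedaObj A M).iCycles_d n (n + 1)) c)

lemma exists_class (f : P.complex.X n ⟶ M) (hf : P.complex.d (n + 1) n ≫ f = 0) :
    ∃ x : ((Ext A C n).obj (op X)).obj M, P.Represents A f x := by
  have he := (ShortComplex.moduleCat_exact_iff _).1
    (ShortComplex.exact_of_f_is_kernel
      (ShortComplex.mk _ _ ((P.complex.linearYonedaObj A M).iCycles_d n (n + 1)))
      ((P.complex.linearYonedaObj A M).cyclesIsKernel n (n + 1) (by simp))) f hf
  obtain ⟨c, hc⟩ := he
  refine ⟨(P.isoExt n M).inv ((P.complex.linearYonedaObj A M).homologyπ n c), c, hc, ?_⟩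
  simp

lemma Represents.sub {f g : P.complex.X n ⟶ M} {x y : ((Ext A C n).obj (op X)).obj M}
    (hx : P.Represents A f x) (hy : P.Represents A g y) : P.Represents A (f - g) (x - y) := by
  obtain ⟨c, hc, hc'⟩ := hx
  obtain ⟨d, hd, hd'⟩ := hy
  refine ⟨c - d, ?_, ?_⟩
  · rw [map_sub, hc, hd]; rfl
  · rw [map_sub, map_sub, hc', hd']

lemma Represents.eq_zero_iff {f : P.complex.X (n + 1) ⟶ M}
    {x : ((Ext A C (n + 1)).obj (op X)).obj M} (hx : P.Represents A f x) :
    x = 0 ↔ ∃ g : P.complex.X n ⟶ M, P.complex.d (n + 1) n ≫ g = f := by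
  obtain ⟨c, hc, hc'⟩ := hx
  have he := (ShortComplex.moduleCat_exact_iff _).1
    (ShortComplex.exact_of_g_is_cokernel
      (ShortComplex.mk _ _ ((P.complex.linearYonedaObj A M).toCycles_comp_homologyπ n (n + 1)))
      ((P.complex.linearYonedaObj A M).homologyIsCokernel n (n + 1) (by simp))) c
  have hi : Function.Injective ((P.complex.linearYonedaObj A M).iCycles (n + 1)) :=
    (ModuleCat.mono_iff_injective _).1 inferInstance
  have hj : Function.Injective (P.isoExt (R := A) (n + 1) M).hom :=
    (ModuleCat.mono_iff_injective _).1 inferInstance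
  have ht (g : P.complex.X n ⟶ M) : (P.complex.linearYonedaObj A M).iCycles (n + 1)
      ((P.complex.linearYonedaObj A M).toCycles n (n + 1) g) = P.complex.d (n + 1) n ≫ g :=
    congr($((P.complex.linearYonedaObj A M).toCycles_i n (n + 1)) g)
  constructor
  · rintro rfl
    obtain ⟨g, hg⟩ := he (by simpa using hc')
    exact ⟨g, (ht g).symm.trans ((congrArg _ hg).trans hc)⟩
  · rintro ⟨g, rfl⟩
    apply hj
    rw [map_zero, ← hc', ← hi ((ht g).trans hc.symm)]
    exact congr($((P.complex.linearYonedaObj A M).toCycles_comp_homologyπ n (n + 1)) g)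

variable {P Q} in
lemma Represents.map {g : X ⟶ Y} (φ : Hom P Q g) {f : Q.complex.X n ⟶ M}
    {x : ((Ext A C n).obj (op Y)).obj M} (hx : Q.Represents A f x) :
    P.Represents A (φ.hom.f n ≫ f) (((Ext A C n).map g.op).app M x) := by
  obtain ⟨c, hc, hc'⟩ := hx
  refine ⟨HomologicalComplex.cyclesMap (linearYonedaMap A φ.hom M) n c, ?_, ?_⟩
  · rw [← linearYonedaMap_f (A := A), ← hc]
    exact congr($(HomologicalComplex.cyclesMap_i (linearYonedaMap A φ.hom M) n) c)
  · have h₁ := congr($(HomologicalComplex.homologyπ_naturality (linearYonedaMap A φ.hom M) n) c)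
    have h₂ := congr($(isoExt_hom_naturality g P Q φ.hom
      (φ.hom_f_zero_comp_π_f_zero.trans (by simp)) n M) x)
    exact h₁.symm.trans (.trans (congrArg
      (HomologicalComplex.homologyMap (linearYonedaMap A φ.hom M) n) hc') h₂.symm)

/-- If `Ext` computed by left derived functors vanishes, then so does `Ext` defined in terms of
the derived category. -/
lemma eq_zero_of_isZero_ext [HasExt C] (h : IsZero (((Ext A C (n + 1)).obj (op X)).obj M))
    (x : Abelian.Ext X M (n + 1)) : x = 0 := by
  let P := ProjectiveResolution.of X
  obtain ⟨f, hf, rfl⟩ := P.extMk_surjective x (n + 2) rfl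
  obtain ⟨x, hx⟩ := P.exists_class (A := A) f hf
  have := ModuleCat.subsingleton_of_isZero h
  rw [P.extMk_eq_zero_iff _ _ _ _ _ rfl]
  exact hx.eq_zero_iff.1 (Subsingleton.elim _ _)

/-- The zero morphism induces the zero map on `Ext` in positive degrees. -/
lemma ext_map_zero (X Y M : C) (n : ℕ) : ((Ext A C (n + 1)).map (0 : X ⟶ Y).op).app M = 0 := by
  ext x
  let P := ProjectiveResolution.of X
  let Q := ProjectiveResolution.of Y
  obtain ⟨f, -, hf⟩ := Q.exists_represents x
  let φ : Hom P Q (0 : X ⟶ Y) := ⟨0, zero_comp.trans (by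
    rw [Functor.map_zero]; exact comp_zero.symm)⟩
  exact (hf.map φ).eq_zero_iff.2 ⟨0, by simp [φ]⟩

lemma ext_map_surjective_of_mono [HasExt C] (g : X ⟶ Y) [Mono g]
    (h : IsZero (((Ext A C (n + 2)).obj (op (cokernel g))).obj M)) :
    Function.Surjective (((Ext A C (n + 1)).map g.op).app M) := by
  intro x
  let P := ProjectiveResolution.of X
  let Q := ProjectiveResolution.of Y
  obtain ⟨f, hf, hx⟩ := P.exists_represents x
  have hS : (ShortComplex.mk g (cokernel.π g) (by simp)).ShortExact :=
    { exact := ShortComplex.exact_cokernel g }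
  obtain ⟨y, hy⟩ := Abelian.Ext.contravariant_sequence_exact₁ hS M (P.extMk f _ rfl hf)
    (n₁ := n + 2) (by omega) (eq_zero_of_isZero_ext h _)
  obtain ⟨k, hk, rfl⟩ := Q.extMk_surjective y (n + 2) rfl
  obtain ⟨y, hy'⟩ := Q.exists_class (A := A) k hk
  let φ : Hom P Q g := ⟨lift g P Q, (lift_commutes_zero g P Q).trans (by simp)⟩
  refine ⟨y, ?_⟩
  rw [← sub_eq_zero, ((hy'.map φ).sub _ hx).eq_zero_iff, ← P.extMk_eq_zero_iff _ _ rfl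
    (by simp [hf, hk, ← φ.hom.comm_assoc]) _ rfl, ← P.sub_extMk _ _ _ rfl
    (by simp [hk, ← φ.hom.comm_assoc]) hf, ← mk₀_comp_extMk k _ rfl hk φ]
  exact sub_eq_zero.2 hy

end CategoryTheory.ProjectiveResolution

section

universe w

variable {A : Type*} [Ring A] {ι : Type w}

/-- Let `φ i : E i ⟶ T` and `q j : T ⟶ E' j` be families of linear maps with `φ i ≫ q j = 0` for
`i ≠ j`. Then the image in `T` of an element of `∐ E` is killed by all but finitely many `q j`. -/
lemma ModuleCat.finite_setOf_sigmaDesc_apply_ne_zero (E : ι → ModuleCat.{w} A) {T : ModuleCat.{w} A}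
    (φ : ∀ i, E i ⟶ T) {E' : ι → ModuleCat.{w} A} (q : ∀ i, T ⟶ E' i)
    (h : ∀ i j, i ≠ j → φ i ≫ q j = 0) (z : (∐ E : ModuleCat.{w} A)) :
    {j | q j (Sigma.desc φ z) ≠ 0}.Finite := by
  let S : Submodule A (∐ E : ModuleCat.{w} A) :=
    { carrier := {z | {j | q j (Sigma.desc φ z) ≠ 0}.Finite}
      add_mem' := fun {a b} ha hb ↦ (ha.union hb).subset fun j hj ↦ by
        by_contra hab
        simp only [Set.mem_union, Set.mem_ofPred_eq, not_or, not_not] at hab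
        exact hj (by rw [map_add, map_add, hab.1, hab.2, add_zero])
      zero_mem' := by simp
      smul_mem' := fun r a ha ↦ ha.subset fun j hj hja ↦ hj (by
        rw [map_smul, map_smul, hja, smul_zero]) }
  have hS : ModuleCat.ofHom S.mkQ = 0 := by
    refine Sigma.hom_ext _ _ fun i ↦ ?_
    ext x
    refine (Submodule.Quotient.mk_eq_zero S).2 ((Set.finite_singleton i).subset fun j hj ↦ ?_)
    by_contra hij
    refine hj ?_
    have h₁ : Sigma.desc φ (Sigma.ι E i x) = φ i x := congr($(Sigma.ι_desc φ i) x)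
    refine (congrArg (q j) h₁).trans ?_
    exact congr($(h i j fun e ↦ hij e.symm) x)
  exact (Submodule.Quotient.mk_eq_zero S).1 congr($hS z)

end

theorem extN_inverts_countable_products_iff_injdim_lt
    (R : Type) [Ring R] (n : ℕ) (hn : 1 ≤ n) (M : RMod R) (hM : HasInjDimLE R n M) :
    (∀ (N : ℕ → RMod R),
      IsIso (Sigma.desc
        (fun i => ((Ext ℤ (RMod R) n).flip.obj M).map ((Pi.π N i).op)))) ↔
    HasInjDimLE R (n - 1) M := by
  obtain ⟨n, rfl⟩ : ∃ m, n = m + 1 := ⟨n - 1, by omega⟩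
  refine ⟨fun h k hk N ↦ ?_, fun h N ↦ ?_⟩
  · obtain rfl | hk : k = n + 1 ∨ n + 1 < k := by omega
    swap
    · exact hM k hk N
    refine ModuleCat.isZero_iff_subsingleton.2 (subsingleton_of_forall_eq 0 fun x ↦ ?_)
    let X : RMod R := ModuleCat.of Rᵐᵒᵖ (ℕ →₀ N)
    let s (i : ℕ) : N ⟶ X := ModuleCat.ofHom (Finsupp.lsingle i)
    let c : X ⟶ N := ModuleCat.ofHom (Finsupp.lsum ℕ fun _ ↦ LinearMap.id)
    let g : X ⟶ ∏ᶜ fun _ : ℕ ↦ N := Pi.lift fun i ↦ ModuleCat.ofHom (Finsupp.lapply i)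
    have hg (i : ℕ) : g ≫ Pi.π (fun _ : ℕ ↦ N) i = ModuleCat.ofHom (Finsupp.lapply i) :=
      Pi.lift_π _ i
    have hsc (i : ℕ) : s i ≫ c = 𝟙 N := by
      ext y
      exact Finsupp.sum_single_index rfl
    have hsg (i j : ℕ) (hij : i ≠ j) : (s j ≫ g) ≫ Pi.π (fun _ : ℕ ↦ N) i = 0 := by
      rw [Category.assoc, hg]
      ext y
      exact Finsupp.single_eq_of_ne hij
    have : Mono g := by
      refine (ModuleCat.mono_iff_injective _).2 fun a b hab ↦ Finsupp.ext fun i ↦ ?_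
      have hi (y : X) : y i = Pi.π (fun _ : ℕ ↦ N) i (g y) := congr($((hg i).symm) y)
      rw [hi, hi, hab]
    let E : (RMod R)ᵒᵖ ⥤ ModuleCat ℤ := (Ext ℤ (RMod R) (n + 1)).flip.obj M
    obtain ⟨z, hz⟩ := ProjectiveResolution.ext_map_surjective_of_mono (A := ℤ) (M := M) g
      (hM (n + 2) (by omega) _) (E.map c.op x)
    have := h fun _ ↦ N
    obtain ⟨w, rfl⟩ := (ModuleCat.epi_iff_surjective (Sigma.desc fun i ↦
      E.map (Pi.π (fun _ : ℕ ↦ N) i).op)).1 inferInstance z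
    obtain ⟨j, hj⟩ := (ModuleCat.finite_setOf_sigmaDesc_apply_ne_zero _ _
      (fun j ↦ E.map (s j ≫ g).op) (fun i j hij ↦ by
        rw [← E.map_comp, ← op_comp, hsg i j hij]
        exact ProjectiveResolution.ext_map_zero (A := ℤ) N N M n) w).exists_notMem
    simp only [Set.mem_ofPred_eq, not_not] at hj
    rw [op_comp, E.map_comp] at hj
    have hx : E.map (s j).op (E.map c.op x) = x := by
      have : E.map c.op ≫ E.map (s j).op = 𝟙 _ := by
        rw [← E.map_comp, ← op_comp, hsc, op_id, E.map_id]
      exact congr($this x)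
    rw [← hx, ← hz]
    exact hj
  · have hN (X : RMod R) : IsZero (((Ext ℤ (RMod R) (n + 1)).flip.obj M).obj (op X)) :=
      h (n + 1) (by omega) X
    refine isIso_of_source_target_iso_zero _ (IsZero.isoZero ?_) (hN _).isoZero
    rw [IsZero.iff_id_eq_zero]
    exact Sigma.hom_ext _ _ fun i ↦ (hN (N i)).eq_of_src _ _
end
end

section
/- If M is an fp-Ω¹ right R-module, then Ext¹_R(M, −) commutes with direct limits: for every direct system (M_i)_{i∈I} over a directed set I, the canonical homomorphism colim Ext¹_R(M, M_i) → Ext¹_R(M, colim M_i) is an isomorphism. -/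
open CategoryTheory CategoryTheory.Limits Opposite

noncomputable section

section FilteredColimit

universe u

variable {S : Type u} [Ring S] {J : Type u} [SmallCategory J] [IsFiltered J]
  {G : J ⥤ ModuleCat.{u} S} {c : Cocone G}

/-- A morphism from a finitely generated module to a stage of a filtered system which vanishes in
the colimit already vanishes at a later stage. -/
lemma exists_map_eq_zero_of_finite (hc : IsColimit c) {N : ModuleCat.{u} S} [Module.Finite S N]
    {j : J} (f : N ⟶ G.obj j) (hf : f ≫ c.ι.app j = 0) :
    ∃ (k : J) (a : j ⟶ k), f ≫ G.map a = 0 := by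
  classical
  obtain ⟨T, hT⟩ := Module.Finite.fg_top (R := S) (M := N)
  have key : ∀ U : Finset N, ∃ (k : J) (a : j ⟶ k), ∀ t ∈ U, G.map a (f t) = 0 := by
    intro U
    induction U using Finset.induction_on with
    | empty => exact ⟨j, 𝟙 j, by simp⟩
    | insert t U _ ih =>
      obtain ⟨k, a, ha⟩ := ih
      have ht : c.ι.app j (f t) = c.ι.app j 0 := by
        rw [map_zero, ← ModuleCat.comp_apply, hf]; rfl
      obtain ⟨l, b, b', hb⟩ := Concrete.isColimit_exists_of_rep_eq G hc _ _ ht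
      obtain ⟨n, p, q, hpq⟩ := IsFilteredOrEmpty.cocone_objs k l
      obtain ⟨r, s, hs⟩ := IsFilteredOrEmpty.cocone_maps (a ≫ p) (b ≫ q)
      refine ⟨r, (a ≫ p) ≫ s, fun x hx => ?_⟩
      rcases Finset.mem_insert.1 hx with rfl | hx
      · rw [hs, Category.assoc, G.map_comp, ModuleCat.comp_apply, hb, map_zero, map_zero]
      · rw [Category.assoc, G.map_comp, ModuleCat.comp_apply, ha x hx, map_zero]
  obtain ⟨k, a, ha⟩ := key T
  refine ⟨k, a, ModuleCat.hom_ext (LinearMap.ext_on hT fun t ht => ?_)⟩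
  simpa using ha t ht

/-- Finitely many elements of a filtered colimit have representatives at a common stage. -/
lemma exists_common_rep (hc : IsColimit c) {α : Type*} (T : Finset α) (x : α → c.pt) :
    ∃ (k : J) (y : α → G.obj k), ∀ t ∈ T, c.ι.app k (y t) = x t := by
  classical
  choose j z hz using fun t => Concrete.isColimit_exists_rep G hc (x t)
  obtain ⟨k, hk⟩ := IsFiltered.sup_objs_exists (T.image j)
  refine ⟨k, fun t => if h : t ∈ T then
    G.map (hk (Finset.mem_image_of_mem j h)).some (z t) else 0, fun t ht => ?_⟩
  simp only [dif_pos ht]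
  rw [← ModuleCat.comp_apply, c.w, hz]

/-- A morphism from a finitely presented module to a filtered colimit factors through some stage. -/
lemma exists_factor_of_finitePresentation (hc : IsColimit c) {K : ModuleCat.{u} S}
    [Module.FinitePresentation S K] (f : K ⟶ c.pt) :
    ∃ (k : J) (g : K ⟶ G.obj k), g ≫ c.ι.app k = f := by
  obtain ⟨n, m, q, r, hq, hrq⟩ := Module.FinitePresentation.exists_fin' S K
  let q' : ModuleCat.of S (Fin n → S) ⟶ K := ModuleCat.ofHom q
  let r' : ModuleCat.of S (Fin m → S) ⟶ ModuleCat.of S (Fin n → S) := ModuleCat.ofHom r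
  have w : r' ≫ q' = 0 := ModuleCat.hom_ext hrq.linearMap_comp_eq_zero
  have hex : (ShortComplex.mk r' q' w).Exact :=
    ShortComplex.Exact.moduleCat_of_range_eq_ker _ _ (LinearMap.exact_iff.1 hrq).symm
  have : Epi q' := (ModuleCat.epi_iff_surjective _).2 hq
  obtain ⟨j, y, hy⟩ := exists_common_rep hc Finset.univ
    (fun i => f (q (Pi.basisFun S (Fin n) i)))
  let φ : ModuleCat.of S (Fin n → S) ⟶ G.obj j :=
    ModuleCat.ofHom ((Pi.basisFun S (Fin n)).constr ℕ y)
  have hφ : φ ≫ c.ι.app j = q' ≫ f := by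
    refine ModuleCat.hom_ext ((Pi.basisFun S (Fin n)).ext fun i => ?_)
    have := hy i (Finset.mem_univ i)
    simp only [φ, q', ModuleCat.hom_comp, ModuleCat.hom_ofHom, LinearMap.comp_apply,
      Module.Basis.constr_basis]
    exact this
  obtain ⟨k, a, ha⟩ := exists_map_eq_zero_of_finite hc (r' ≫ φ)
    (by rw [Category.assoc, hφ, reassoc_of% w, zero_comp])
  refine ⟨k, hex.desc (φ ≫ G.map a) (by simpa using ha), ?_⟩
  rw [← cancel_epi q', ← hφ, ← Category.assoc, hex.g_desc, Category.assoc, c.w]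

/-- If `K` is finitely generated, `P` is projective and `f : K ⟶ G.obj j` extends along `K ⟶ P` in
the colimit, then it already extends at a later stage. -/
lemma exists_extension_of_finite (hc : IsColimit c) {K P : ModuleCat.{u} S} [Module.Finite S K]
    [Projective P] (i : K ⟶ P) {j : J} (f : K ⟶ G.obj j) (h : P ⟶ c.pt)
    (hfh : i ≫ h = f ≫ c.ι.app j) :
    ∃ (k : J) (a : j ⟶ k) (h' : P ⟶ G.obj k), i ≫ h' = f ≫ G.map a := by
  classical
  let r : ModuleCat.of S (P →₀ S) ⟶ P := ModuleCat.ofHom (Finsupp.linearCombination S id)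
  have : Epi r := (ModuleCat.epi_iff_surjective _).2 fun x => ⟨Finsupp.single x 1, by simp [r]⟩
  let s : P ⟶ ModuleCat.of S (P →₀ S) := Projective.factorThru (𝟙 P) r
  have hsr : s ≫ r = 𝟙 P := Projective.factorThru_comp _ _
  obtain ⟨T, hT⟩ := Module.Finite.fg_top (R := S) (M := K)
  let supp (t : K) : Finset P := ((s (i t) : P →₀ S)).support
  obtain ⟨k, y, hy⟩ := exists_common_rep hc (T.biUnion supp) fun x => h x
  let φ : ModuleCat.of S (P →₀ S) ⟶ G.obj k := ModuleCat.ofHom (Finsupp.linearCombination S y)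
  have hφ : (i ≫ s ≫ φ) ≫ c.ι.app k = f ≫ c.ι.app j := by
    rw [← hfh]
    refine ModuleCat.hom_ext (LinearMap.ext_on hT fun t ht => ?_)
    have e : h (i t) = h ((s ≫ r) (i t)) := by rw [hsr]; rfl
    change c.ι.app k (Finsupp.linearCombination S y (s (i t) : P →₀ S)) = h (i t)
    rw [e]
    change _ = h (Finsupp.linearCombination S id (s (i t) : P →₀ S))
    simp only [Finsupp.linearCombination_apply, Finsupp.sum, map_sum, map_smul, id]
    refine Finset.sum_congr rfl fun x hx => ?_
    rw [hy x (Finset.mem_biUnion.2 ⟨t, ht, hx⟩)]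
  obtain ⟨l, p, q, -⟩ := IsFilteredOrEmpty.cocone_objs k j
  obtain ⟨m, b, hb⟩ := exists_map_eq_zero_of_finite hc
    ((i ≫ s ≫ φ) ≫ G.map p - f ≫ G.map q) (by
      rw [Preadditive.sub_comp, Category.assoc _ (G.map p), Category.assoc f, c.w, c.w, hφ,
        sub_self])
  refine ⟨m, q ≫ b, s ≫ φ ≫ G.map (p ≫ b), ?_⟩
  rw [Preadditive.sub_comp, sub_eq_zero] at hb
  simpa using hb

end FilteredColimit

section Ext

universe v u
variable (A : Type*) [Ring A] {C : Type u} [Category.{v} C] [Abelian C] [Linear A C]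
  [EnoughProjectives C]

/-- Elements of `Extⁿ⁺¹(X, Y)` are classes of cocycles on a projective resolution of `X`, naturally
in `Y`. -/
lemma exists_extClass_of_projectiveResolution (n : ℕ) {X : C} (Q : ProjectiveResolution X) :
    ∃ cls : ∀ (Y : C) (g : Q.complex.X (n + 1) ⟶ Y), Q.complex.d (n + 2) (n + 1) ≫ g = 0 →
        ((Ext A C (n + 1)).obj (op X)).obj Y,
      (∀ Y x, ∃ g hg, cls Y g hg = x) ∧
      (∀ Y g g' hg hg', cls Y g hg = cls Y g' hg' ↔ ∃ h, Q.complex.d (n + 1) n ≫ h = g - g') ∧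
      (∀ Y Z (f : Y ⟶ Z) g hg, ((Ext A C (n + 1)).obj (op X)).map f (cls Y g hg) =
        cls Z (g ≫ f) (by rw [reassoc_of% hg, zero_comp])) := by
  let F (Y : C) : C ⥤ (ModuleCat A)ᵒᵖ := ((linearYoneda A C).obj Y).rightOp
  let K (Y : C) := ((F Y).mapHomologicalComplex (ComplexShape.down ℕ)).obj Q.complex
  let e (Y : C) : unop ((K Y).homology (n + 1)) ≅ ((Ext A C (n + 1)).obj (op X)).obj Y :=
    (Q.isoLeftDerivedObj (F Y) (n + 1)).unop
  let κ {Y Z : C} (f : Y ⟶ Z) : K Z ⟶ K Y := (NatTrans.mapHomologicalComplex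
    (NatTrans.rightOp ((linearYoneda A C).map f)) _).app Q.complex
  have hmap {Y Z : C} (f : Y ⟶ Z) : ((Ext A C (n + 1)).obj (op X)).map f =
      (e Y).inv ≫ (HomologicalComplex.homologyMap (κ f) (n + 1)).unop ≫ (e Z).hom := by
    have := congrArg Quiver.Hom.unop (Q.leftDerived_app_eq
      (NatTrans.rightOp ((linearYoneda A C).map f)) (n + 1))
    simp only [unop_comp, Category.assoc] at this
    exact this
  let p (Y : C) : ((K Y).opcycles (n + 1)).unop ⟶ ModuleCat.of A (Q.complex.X (n + 1) ⟶ Y) :=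
    ((K Y).pOpcycles (n + 1)).unop
  let ι (Y : C) : ((K Y).opcycles (n + 1)).unop ⟶ ((Ext A C (n + 1)).obj (op X)).obj Y :=
    ((K Y).homologyι (n + 1)).unop ≫ (e Y).hom
  have hι (Y : C) : Function.Surjective (ι Y) := by
    rw [← ModuleCat.epi_iff_surjective]
    exact epi_comp _ _
  have hp (Y : C) : Function.Injective (p Y) := by
    rw [← ModuleCat.mono_iff_injective]
    exact unop_mono_of_epi _
  have hp' (Y : C) (g : Q.complex.X (n + 1) ⟶ Y) (hg : Q.complex.d (n + 2) (n + 1) ≫ g = 0) :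
      ∃ z, p Y z = g := by
    have h := (ShortComplex.exact_of_g_is_cokernel
      (ShortComplex.mk _ _ ((K Y).d_pOpcycles (n + 2) (n + 1)))
      ((K Y).opcyclesIsCokernel (n + 2) (n + 1) (by simp))).unop
    exact (ShortComplex.moduleCat_exact_iff _).1 h g hg
  have hι' (Y : C) (z) : ι Y z = 0 ↔
      ∃ h, Q.complex.d (n + 1) n ≫ h = (p Y z : Q.complex.X (n + 1) ⟶ Y) := by
    have h := (ShortComplex.exact_of_f_is_kernel
      (ShortComplex.mk _ _ ((K Y).homologyι_comp_fromOpcycles (n + 1) n))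
      ((K Y).homologyIsKernel (n + 1) n (by simp))).unop
    have hd (x : Q.complex.X n ⟶ Y) : p Y (((K Y).fromOpcycles (n + 1) n).unop x) =
        Q.complex.d (n + 1) n ≫ x :=
      congrArg (fun φ => φ.unop.hom x) ((K Y).p_fromOpcycles (n + 1) n)
    have he : Function.Injective (e Y).hom := by
      rw [← ModuleCat.mono_iff_injective]
      infer_instance
    constructor
    · intro hz
      obtain ⟨x, hx⟩ := (ShortComplex.moduleCat_exact_iff _).1 h z
        (he (hz.trans (map_zero _).symm))
      exact ⟨x, (hd x).symm.trans (congrArg (p Y) hx)⟩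
    · rintro ⟨x, hx⟩
      have hz : ((K Y).fromOpcycles (n + 1) n).unop x = z := hp Y ((hd x).trans hx)
      have h0 : ((K Y).homologyι (n + 1)).unop (((K Y).fromOpcycles (n + 1) n).unop x) = 0 :=
        congrArg (fun φ => φ.unop.hom x) ((K Y).homologyι_comp_fromOpcycles (n + 1) n)
      rw [← hz]
      exact (congrArg (e Y).hom h0).trans (map_zero _)
  choose lft hl using hp'
  refine ⟨fun Y g hg => ι Y (lft Y g hg), fun Y x => ?_, fun Y g g' hg hg' => ?_,
    fun Y Z f g hg => ?_⟩
  · obtain ⟨z, rfl⟩ := hι Y x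
    have hz : Q.complex.d (n + 2) (n + 1) ≫ (p Y z : Q.complex.X (n + 1) ⟶ Y) = 0 :=
      congrArg (fun φ => φ.unop.hom z) ((K Y).d_pOpcycles (n + 2) (n + 1))
    exact ⟨p Y z, hz, congrArg (ι Y) (hp Y (hl Y _ hz))⟩
  · rw [← sub_eq_zero, ← map_sub, hι', map_sub, hl, hl]
  · have hp_nat (z) : p Z ((HomologicalComplex.opcyclesMap (κ f) (n + 1)).unop z) =
        (p Y z : Q.complex.X (n + 1) ⟶ Y) ≫ f :=
      congrArg (fun φ => φ.unop.hom z) (HomologicalComplex.p_opcyclesMap (κ f) (n + 1))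
    have hι_nat : ι Y ≫ ((Ext A C (n + 1)).obj (op X)).map f =
        (HomologicalComplex.opcyclesMap (κ f) (n + 1)).unop ≫ ι Z := by
      have h := congrArg Quiver.Hom.unop (HomologicalComplex.homologyι_naturality (κ f) (n + 1))
      rw [hmap]
      simp only [ι, Category.assoc, Iso.hom_inv_id_assoc]
      simp only [unop_comp] at h
      rw [reassoc_of% h]
    rw [← ModuleCat.comp_apply, hι_nat, ModuleCat.comp_apply]
    refine congrArg (ι Z) (hp Z ?_)
    rw [hl, hp_nat, hl]

/-- For `0 → K → P → X → 0` exact with `P` projective, `Ext¹(X, Y)` is the quotient of `K ⟶ Y` by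
the morphisms which extend to `P`, naturally in `Y`. -/
lemma exists_connecting_map {K P X : C} {i : K ⟶ P} {p : P ⟶ X} {w : i ≫ p = 0} [Mono i] [Epi p]
    [Projective P] (hex : (ShortComplex.mk i p w).Exact) :
    ∃ δ : ∀ Y : C, (K ⟶ Y) → ((Ext A C 1).obj (op X)).obj Y,
      (∀ Y, Function.Surjective (δ Y)) ∧
      (∀ Y f f', δ Y f = δ Y f' ↔ ∃ h, i ≫ h = f - f') ∧
      (∀ Y Z (g : Y ⟶ Z) f, ((Ext A C 1).obj (op X)).map g (δ Y f) = δ Z (f ≫ g)) := by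
  let Q := projectiveResolution X
  obtain ⟨cls, hsurj, heq, hnat⟩ := exists_extClass_of_projectiveResolution A 0 Q
  let d := Q.complex.d 1 0
  let π : Q.complex.X 0 ⟶ X := Q.π.f 0
  have hdπ : d ≫ π = 0 := Q.complex_d_comp_π_f_zero
  have hQ₀ : (ShortComplex.mk d π hdπ).Exact :=
    ShortComplex.exact_of_g_is_cokernel _ Q.isColimitCokernelCofork
  have : Epi π := inferInstanceAs (Epi (Q.π.f 0))
  let a : P ⟶ Q.complex.X 0 := Projective.factorThru p π
  let b : Q.complex.X 0 ⟶ P := Projective.factorThru π p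
  have ha : a ≫ π = p := Projective.factorThru_comp _ _
  have hb : b ≫ p = π := Projective.factorThru_comp _ _
  let t : Q.complex.X 1 ⟶ K := hex.lift (d ≫ b) (by simp [hb, hdπ])
  have ht : t ≫ i = d ≫ b := hex.lift_f _ _
  have hdt : Q.complex.d 2 1 ≫ t = 0 := by
    rw [← cancel_mono i, Category.assoc, ht]
    simp [d]
  let e : Q.complex.X 1 ⟶ kernel π := kernel.lift π d hdπ
  have he : e ≫ kernel.ι π = d := kernel.lift_ι _ _ _
  have : Epi e := hQ₀.epi_kernelLift
  have hde : Q.complex.d 2 1 ≫ e = 0 := by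
    rw [← cancel_mono (kernel.ι π), Category.assoc, he]
    simp [d]
  have hQ₁ : (ShortComplex.mk (Q.complex.d 2 1) e hde).Exact := by
    refine (ShortComplex.exact_iff_of_epi_of_isIso_of_mono
      (S₁ := ShortComplex.mk (Q.complex.d 2 1) e hde)
      (S₂ := ShortComplex.mk (Q.complex.d 2 1) d (by simp [d]))
      { τ₁ := 𝟙 _, τ₂ := 𝟙 _, τ₃ := kernel.ι π, comm₁₂ := by simp, comm₂₃ := by simp [he] }).2 ?_
    exact Q.exact_succ 0
  let s : K ⟶ kernel π := kernel.lift π (i ≫ a) (by simp [ha, w])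
  have hs : s ≫ kernel.ι π = i ≫ a := kernel.lift_ι _ _ _
  have hdtf (Y : C) (f : K ⟶ Y) : Q.complex.d 2 1 ≫ t ≫ f = 0 := by
    rw [reassoc_of% hdt, zero_comp]
  refine ⟨fun Y f => cls Y (t ≫ f) (hdtf Y f), fun Y x => ?_, fun Y f f' => ?_,
    fun Y Z g f => by simp [hnat]⟩
  · obtain ⟨g, hg, rfl⟩ := hsurj Y x
    let g' := hQ₁.desc g hg
    have hg' : e ≫ g' = g := hQ₁.g_desc g hg
    let c : Q.complex.X 0 ⟶ kernel π := kernel.lift π (𝟙 _ - b ≫ a) (by simp [ha, hb])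
    have hc : c ≫ kernel.ι π = 𝟙 _ - b ≫ a := kernel.lift_ι _ _ _
    have hts : t ≫ s = e - d ≫ c := by
      rw [← cancel_mono (kernel.ι π)]
      simp [hs, he, hc, reassoc_of% ht]
    refine ⟨s ≫ g', (heq _ _ _ _ _).2 ⟨-(c ≫ g'), ?_⟩⟩
    rw [reassoc_of% hts, Preadditive.sub_comp, hg']
    simp [d]
  · rw [heq]
    constructor
    · rintro ⟨h, hh⟩
      let c : P ⟶ K := hex.lift (𝟙 _ - a ≫ b) (by simp [ha, hb])
      have hc : c ≫ i = 𝟙 _ - a ≫ b := hex.lift_f _ _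
      let r : kernel π ⟶ K := hex.lift (kernel.ι π ≫ b) (by simp [hb])
      have hr : r ≫ i = kernel.ι π ≫ b := hex.lift_f _ _
      have her : e ≫ r = t := by
        rw [← cancel_mono i, Category.assoc, hr, ht, reassoc_of% he]
      have hrf : r ≫ (f - f') = kernel.ι π ≫ h := by
        rw [← cancel_epi e, reassoc_of% her, reassoc_of% he, Preadditive.comp_sub]
        exact hh.symm
      have hsr : i ≫ c = 𝟙 _ - s ≫ r := by
        rw [← cancel_mono i]
        simp [hc, hr, reassoc_of% hs]
      refine ⟨a ≫ h + c ≫ (f - f'), ?_⟩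
      rw [Preadditive.comp_add, reassoc_of% hsr, Preadditive.sub_comp, Category.assoc, hrf,
        reassoc_of% hs]
      simp
    · rintro ⟨h, hh⟩
      refine ⟨b ≫ h, ?_⟩
      rw [← Preadditive.comp_sub, ← hh, reassoc_of% ht]

end Ext

theorem fpOmega1_ext1_commutes_with_direct_limits (R : Type) [Ring R] (M : RMod R)
    (h : IsOmega1 R (fun K => Module.FinitePresentation Rᵐᵒᵖ K) M) :
    CommutesWithDirectLimits R M := by
  obtain ⟨K, P, i, p, w, _, _, hex, _, hK⟩ := h
  have : Module.FinitePresentation Rᵐᵒᵖ K := hK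
  intro J _ _ _
  obtain ⟨δ, hsurj, heq, hnat⟩ := exists_connecting_map ℤ hex
  suffices PreservesColimitsOfShape J (extFun R 1 M ⋙ forget (ModuleCat ℤ)) from
    preservesColimitsOfShape_of_reflects_of_preserves _ (forget (ModuleCat ℤ))
  refine ⟨fun {G} => ⟨fun {c} hc => ⟨Types.FilteredColimit.isColimitOf' _ _ ?_ ?_⟩⟩⟩
  · intro x
    obtain ⟨f, rfl⟩ := hsurj _ x
    obtain ⟨k, g, hg⟩ := exists_factor_of_finitePresentation hc f
    refine ⟨k, δ _ g, ?_⟩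
    rw [← hg]
    exact (hnat _ _ (c.ι.app k) g).symm
  · intro j x y hxy
    obtain ⟨f, rfl⟩ := hsurj _ x
    obtain ⟨g, rfl⟩ := hsurj _ y
    have hδ : δ _ (f ≫ c.ι.app j) = δ _ (g ≫ c.ι.app j) :=
      (hnat _ _ _ _).symm.trans (hxy.trans (hnat _ _ _ _))
    obtain ⟨h, hh⟩ := (heq _ _ _).1 hδ
    obtain ⟨k, a, h', hh'⟩ := exists_extension_of_finite hc i (f - g) h
      (hh.trans (Preadditive.sub_comp _ _ _).symm)
    refine ⟨k, a, (hnat _ _ (G.map a) f).trans (Eq.trans ?_ (hnat _ _ (G.map a) g).symm)⟩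
    exact (heq _ _ _).2 ⟨h', hh'.trans (Preadditive.sub_comp _ _ _)⟩
end
end

section
/- If M is a small-Ω¹ right R-module, then Ext¹_R(M, −) commutes with direct sums: for every family (M_i)_{i∈I} of right R-modules, the canonical homomorphism ⨁_{i∈I} Ext¹_R(M, M_i) → Ext¹_R(M, ⨁_{i∈I} M_i) is an isomorphism. -/
open CategoryTheory CategoryTheory.Limits Opposite

noncomputable section

/-- A coproduct of abelian groups is generated by the images of the inclusions. -/
lemma AddCommGrpCat.iSup_range_cofan_eq_top {ι : Type} {f : ι → AddCommGrpCat.{0}} {c : Cofan f}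
    (hc : IsColimit c) : ⨆ i, (c.inj i).hom.range = ⊤ := by
  set S := ⨆ i, (c.inj i).hom.range
  let q : c.pt ⟶ AddCommGrpCat.of (c.pt ⧸ S) := AddCommGrpCat.ofHom (QuotientAddGroup.mk' S)
  have hq : q = 0 := Cofan.IsColimit.hom_ext hc _ _ fun i => by
    ext x
    exact (QuotientAddGroup.eq_zero_iff _).2
      (le_iSup (fun i => (c.inj i).hom.range) i ⟨x, rfl⟩)
  rw [eq_top_iff]
  intro x _
  exact (QuotientAddGroup.eq_zero_iff x).1 (congr($hq x))

/-- If `F` receives a natural additive surjection from `Hom(K, -)`, then `F` preserves every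
coproduct preserved by `Hom(K, -)`. -/
lemma preservesColimit_of_surjective_of_preservesColimit {D : Type*} [Category.{0} D]
    [Preadditive D] {A : Type*} [Ring A]
    {ι : Type} {K : D} {F : D ⥤ ModuleCat.{0} A}
    (π : ∀ Y : D, (K ⟶ Y) →+ F.obj Y)
    (hπ : ∀ Y, Function.Surjective (π Y))
    (nat : ∀ {Y Z : D} (g : Y ⟶ Z) (f : K ⟶ Y), F.map g (π Y f) = π Z (f ≫ g))
    (f : ι → D) [PreservesColimit (Discrete.functor f) (preadditiveCoyoneda.obj (op K))] :
    PreservesColimit (Discrete.functor f) F where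
  preserves {c} hc := by
    classical
    let c' : Cofan f := Cofan.mk c.pt fun i => c.ι.app ⟨i⟩
    have hc' : IsColimit c' := hc.ofIsoColimit (Cofan.ext (Iso.refl _) (by intro i; simp [c']; rfl))
    have zero : ∀ {Y Z : D} (x : F.obj Y), F.map (0 : Y ⟶ Z) x = 0 := fun x => by
      obtain ⟨y, rfl⟩ := hπ _ x
      rw [nat, comp_zero, map_zero]
    have top := AddCommGrpCat.iSup_range_cofan_eq_top
      (isColimitCofanMkObjOfIsColimit (preadditiveCoyoneda.obj (op K)) f _ hc')
    let φ : DirectSum ι (fun i => F.obj (f i)) →ₗ[A] F.obj c.pt :=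
      DirectSum.toModule A ι _ fun i => (F.map (c'.inj i)).hom
    let p (i : ι) : c'.pt ⟶ f i := Cofan.IsColimit.desc hc' fun j =>
      if h : j = i then eqToHom (by rw [h]) else 0
    have hφ : Function.Bijective φ := by
      constructor
      · rw [injective_iff_map_eq_zero]
        intro x hx
        have key : ∀ i (x : DirectSum ι (fun i => F.obj (f i))),
            F.map (p i) (φ x) = x i := by
          intro i x
          induction x using DirectSum.induction_on with
          | zero => simp
          | add x y hx hy => simp [hx, hy]
          | of j x =>
            have : φ (DirectSum.of _ j x) = F.map (c'.inj j) x :=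
              DirectSum.toModule_lof A (φ := fun i => (F.map (c'.inj i)).hom) j x
            rw [this, ← ConcreteCategory.comp_apply, ← F.map_comp]
            have h2 : c'.inj j ≫ p i = if h : j = i then eqToHom (by rw [h]) else 0 :=
              Cofan.IsColimit.fac hc' _ j
            rw [h2]
            split_ifs with h
            · subst h; simp
            · rw [zero, DirectSum.of_eq_of_ne _ _ _ (Ne.symm h)]
        ext i
        rw [← key, hx, map_zero]; rfl
      · intro x
        obtain ⟨g, rfl⟩ := hπ _ x
        have hg : g ∈ (LinearMap.range φ).toAddSubgroup.comap (π c.pt) := by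
          have : (⊤ : AddSubgroup (K ⟶ c.pt)) ≤
              (LinearMap.range φ).toAddSubgroup.comap (π c.pt) := by
            refine top.symm.le.trans (iSup_le fun i => ?_)
            rintro _ ⟨(y : K ⟶ f i), rfl⟩
            refine ⟨DirectSum.lof A ι _ i (π _ y), ?_⟩
            exact (DirectSum.toModule_lof A (φ := fun i => (F.map (c'.inj i)).hom) i _).trans
              (nat _ _)
          exact this trivial
        exact hg
    let e := LinearEquiv.ofBijective φ hφ
    have hF : IsColimit (Cofan.mk (F.obj c.pt) fun i => F.map (c'.inj i)) :=
      (ModuleCat.coproductCoconeIsColimit fun i => F.obj (f i)).ofIsoColimit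
        (Cofan.ext e.toModuleIso fun i => by
          ext x
          exact DirectSum.toModule_lof A (φ := fun i => (F.map (c'.inj i)).hom) i x)
    have := preservesColimit_of_preserves_colimit_cocone hc'
      ((isColimitMapCoconeCofanMkEquiv F f _).symm hF)
    exact this.preserves hc

section

variable {C : Type*} [Category* C] [Abelian C]

/-- A morphism from a chain complex to an object in degree zero is a quasi-isomorphism if the
augmented complex is exact. -/
lemma ChainComplex.quasiIso_toSingle₀ {X : ChainComplex C ℕ} {Z : C}
    (φ : X ⟶ (ChainComplex.single₀ C).obj Z) {f : X.X 0 ⟶ Z} (hf : φ.f 0 = f)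
    (w : X.d 1 0 ≫ f = 0) (_ : Epi f) (h₀ : (ShortComplex.mk _ _ w).Exact)
    (h : ∀ n, (ShortComplex.mk _ _ (X.d_comp_d (n + 2) (n + 1) n)).Exact) : QuasiIso φ where
  quasiIsoAt n := by
    subst hf
    cases n with
    | zero =>
      rw [ChainComplex.quasiIsoAt₀_iff, ShortComplex.quasiIso_iff_of_zeros']
      · exact ⟨h₀, ‹_›⟩
      · exact X.shape 0 0 (by simp)
      all_goals rfl
    | succ n =>
      rw [quasiIsoAt_iff_exactAt' _ _ (ChainComplex.exactAt_succ_single_obj _ _),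
        HomologicalComplex.exactAt_iff' _ (n + 2) (n + 1) n (by simp) (by simp)]
      exact h n

lemma CategoryTheory.ProjectiveResolution.exists_augmentation {Z : C}
    (Q : ProjectiveResolution Z) :
    ∃ (q : Q.complex.X 0 ⟶ Z) (w : Q.complex.d 1 0 ≫ q = 0),
      Epi q ∧ (ShortComplex.mk _ _ w).Exact :=
  ⟨Q.π.f 0, Q.complex_d_comp_π_f_zero, inferInstanceAs (Epi (Q.π.f 0)), Q.exact₀⟩

/-- If `0 ⟶ K ⟶ P ⟶ M ⟶ 0` is short exact with `P` projective, then `M` has a projective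
resolution in which `K` is the cokernel of the differential from degree two to degree one. -/
lemma exists_projectiveResolution_exact [EnoughProjectives C] {K P M : C} (i : K ⟶ P) {p : P ⟶ M}
    (w : i ≫ p = 0) [Projective P] [Mono i] [Epi p] (h : (ShortComplex.mk i p w).Exact) :
    ∃ (Q : ProjectiveResolution M) (q : Q.complex.X 1 ⟶ K) (hq : Q.complex.d 2 1 ≫ q = 0),
      Epi q ∧ (ShortComplex.mk _ _ hq).Exact := by
  let S := projectiveResolution K
  obtain ⟨q, hq, _, hS⟩ := S.exists_augmentation
  have hqi : S.complex.d 1 0 ≫ q ≫ i = 0 := by rw [reassoc_of% hq, zero_comp]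
  have hqp : (q ≫ i) ≫ p = 0 := by rw [Category.assoc, w, comp_zero]
  have hSi : (ShortComplex.mk _ _ hqi).Exact := by
    let α : ShortComplex.mk _ _ hq ⟶ ShortComplex.mk _ _ hqi :=
      { τ₁ := 𝟙 _
        τ₂ := 𝟙 _
        τ₃ := i }
    exact (ShortComplex.exact_iff_of_epi_of_isIso_of_mono α).1 hS
  have hP : (ShortComplex.mk _ _ hqp).Exact := by
    let α : ShortComplex.mk _ _ hqp ⟶ ShortComplex.mk i p w :=
      { τ₁ := q
        τ₂ := 𝟙 _
        τ₃ := 𝟙 _ }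
    exact (ShortComplex.exact_iff_of_epi_of_isIso_of_mono α).2 h
  let X := S.complex.augment (q ≫ i) hqi
  let Q : ProjectiveResolution M :=
    { complex := X
      projective := fun
        | 0 => ‹Projective P›
        | n + 1 => S.projective n
      π := (ChainComplex.toSingle₀Equiv X M).symm ⟨p, hqp⟩
      quasiIso := ChainComplex.quasiIso_toSingle₀ _
        (ChainComplex.toSingle₀Equiv_symm_apply_f_zero (C := X) p hqp) hqp ‹Epi p› hP fun
          | 0 => hSi
          | n + 1 => S.exact_succ n }
  exact ⟨Q, q, hq, ‹_›, hS⟩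

end

section

variable {A : Type*} [Ring A] {C : Type*} [Category* C] [Abelian C] [Linear A C]

/-- The map induced by `f` on the complexes of morphisms out of `X`. -/
def ChainComplex.linearYonedaMap (X : ChainComplex C ℕ) {Y Z : C} (f : Y ⟶ Z) :
    X.linearYonedaObj A Y ⟶ X.linearYonedaObj A Z :=
  (HomologicalComplex.unopFunctor _ _).map
    ((NatTrans.mapHomologicalComplex (NatTrans.rightOp ((linearYoneda A C).map f)) _).app X).op

lemma isoExt_inv_naturality_aux {D : Type*} [Category* D] {H₁ H₂ : D} {U₁ U₂ E₁ E₂ : Dᵒᵖ}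
    (h₁ : H₁ ≅ unop U₁) (h₂ : H₂ ≅ unop U₂) (a₁ : E₁ ≅ U₁) (a₂ : E₂ ≅ U₂) (m : H₁ ⟶ H₂)
    (k : U₂ ⟶ U₁) (h : h₁.hom ≫ k.unop = m ≫ h₂.hom) :
    (a₁.unop.symm ≪≫ h₁.symm).inv ≫ (a₂.hom ≫ k ≫ a₁.inv).unop =
      m ≫ (a₂.unop.symm ≪≫ h₂.symm).inv := by
  have : a₁.hom.unop ≫ a₁.inv.unop = 𝟙 _ := by rw [← unop_comp, a₁.inv_hom_id, unop_id]
  simp [reassoc_of% h, reassoc_of% this]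

variable {X K : C} (Q : ProjectiveResolution X) (q : Q.complex.X 1 ⟶ K)

/-- Precomposition with `q : Q₁ ⟶ K`, as a map into the cochains of degree one. -/
def homToCochains (Y : C) : ModuleCat.of A (K ⟶ Y) ⟶ (Q.complex.linearYonedaObj A Y).X 1 :=
  ModuleCat.ofHom (Linear.leftComp A Y q)

lemma homToCochains_d (w : Q.complex.d 2 1 ≫ q = 0) (Y : C) :
    homToCochains Q q Y ≫ (Q.complex.linearYonedaObj A Y).d 1 2 = 0 := by
  ext (f : K ⟶ Y)
  exact (Category.assoc _ _ _).symm.trans ((congrArg (· ≫ f) w).trans zero_comp)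

variable (w : Q.complex.d 2 1 ≫ q = 0)

/-- Precomposition with `q : Q₁ ⟶ K`, as a map into the cocycles of degree one. -/
def homToCycles (Y : C) : ModuleCat.of A (K ⟶ Y) ⟶ (Q.complex.linearYonedaObj A Y).cycles 1 :=
  (Q.complex.linearYonedaObj A Y).liftCycles (homToCochains Q q Y) 2 (by simp)
    (homToCochains_d Q q w Y)

lemma homToCycles_i (Y : C) :
    homToCycles Q q w Y ≫ (Q.complex.linearYonedaObj A Y).iCycles 1 = homToCochains Q q Y :=
  HomologicalComplex.liftCycles_i _ _ _ _ _

lemma homToCycles_naturality {Y Z : C} (f : Y ⟶ Z) :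
    homToCycles (A := A) Q q w Y ≫ HomologicalComplex.cyclesMap (Q.complex.linearYonedaMap f) 1 =
      ModuleCat.ofHom (Linear.rightComp A K f) ≫ homToCycles Q q w Z := by
  rw [← cancel_mono (HomologicalComplex.iCycles _ _), Category.assoc, Category.assoc,
    HomologicalComplex.cyclesMap_i, homToCycles_i, ← Category.assoc, homToCycles_i]
  ext (g : K ⟶ Y)
  exact Category.assoc _ _ _

lemma epi_homToCycles [Epi q] (h : (ShortComplex.mk _ _ w).Exact) (Y : C) :
    Epi (homToCycles (A := A) Q q w Y) := by
  rw [ModuleCat.epi_iff_surjective]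
  intro x
  let g : Q.complex.X 1 ⟶ Y := (Q.complex.linearYonedaObj A Y).iCycles 1 x
  have hg : Q.complex.d 2 1 ≫ g = 0 :=
    congr($((Q.complex.linearYonedaObj A Y).iCycles_d 1 2) x)
  refine ⟨h.desc g hg, ?_⟩
  apply (ModuleCat.mono_iff_injective ((Q.complex.linearYonedaObj A Y).iCycles 1)).1 inferInstance
  rw [← ConcreteCategory.comp_apply, homToCycles_i]
  exact h.g_desc g hg

variable [EnoughProjectives C]

/-- The computation of `Ext` by a projective resolution is natural in the second variable. -/
lemma isoExt_inv_naturality (n : ℕ) {Y Z : C} (f : Y ⟶ Z) :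
    (Q.isoExt (R := A) n Y).inv ≫ ((Ext A C n).obj (op X)).map f =
      HomologicalComplex.homologyMap (Q.complex.linearYonedaMap f) n ≫ (Q.isoExt n Z).inv := by
  have h1 : ((Ext A C n).obj (op X)).map f =
      ((NatTrans.leftDerived (NatTrans.rightOp ((linearYoneda A C).map f)) n).app X).unop := rfl
  refine (congrArg _ (h1.trans
    (congrArg _ (ProjectiveResolution.leftDerived_app_eq _ Q n)))).trans ?_
  refine isoExt_inv_naturality_aux (HomologicalComplex.homologyUnop _ _)
    (HomologicalComplex.homologyUnop _ _) _ _ _ _ ?_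
  exact congr(($(HomologicalComplex.homologyOp_hom_naturality
    (Q.complex.linearYonedaMap (A := A) f) n)).unop)

/-- Precomposition with `q : Q₁ ⟶ K` sends a morphism out of `K` to its class in `Ext¹`. -/
def homToExt (Y : C) : ModuleCat.of A (K ⟶ Y) ⟶ ((Ext A C 1).obj (op X)).obj Y :=
  homToCycles Q q w Y ≫ (Q.complex.linearYonedaObj A Y).homologyπ 1 ≫ (Q.isoExt 1 Y).inv

lemma homToExt_naturality {Y Z : C} (f : Y ⟶ Z) :
    homToExt (A := A) Q q w Y ≫ ((Ext A C 1).obj (op X)).map f =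
      ModuleCat.ofHom (Linear.rightComp A K f) ≫ homToExt Q q w Z := by
  simp only [homToExt, Category.assoc]
  rw [isoExt_inv_naturality Q, HomologicalComplex.homologyπ_naturality_assoc,
    ← Category.assoc, homToCycles_naturality, Category.assoc]

lemma homToExt_surjective [Epi q] (h : (ShortComplex.mk _ _ w).Exact) (Y : C) :
    Function.Surjective (homToExt (A := A) Q q w Y) := by
  rw [← ModuleCat.epi_iff_surjective]
  have := epi_homToCycles (A := A) Q q w h Y
  exact epi_comp _ _

end

theorem smallOmega1_ext1_commutes_with_direct_sums (R : Type) [Ring R] (M : RMod R)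
    (h : IsOmega1 R (fun K => IsSmallModule R K) M) :
    CommutesWithDirectSums R M := by
  obtain ⟨K, P, i, p, w, _, _, hex, _, hK⟩ := h
  intro ι
  have := hK ι
  obtain ⟨Q, q, hq, _, hQ⟩ := exists_projectiveResolution_exact i w hex
  have (f : ι → RMod R) : PreservesColimit (Discrete.functor f) (extFun R 1 M) :=
    preservesColimit_of_surjective_of_preservesColimit (K := K)
      (fun Y => (homToExt (A := ℤ) Q q hq Y).hom.toAddMonoidHom)
      (homToExt_surjective Q q hq hQ)
      (fun g f => congr($(homToExt_naturality Q q hq g) f)) f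
  exact preservesColimitsOfShape_of_discrete _
end
end

section
/- Let M be a finitely generated right R-module. If Ext¹_R(M, −) commutes with direct sums, then M is a small-Ω¹-module, i.e., there is an exact sequence 0 → K → P → M → 0 with P projective and K small. -/
open CategoryTheory CategoryTheory.Limits Opposite

noncomputable section

namespace CategoryTheory.ProjectiveResolution

universe u v w
variable {A : Type w} [Ring A] {C : Type u} [Category.{v} C] [Abelian C] [Linear A C]
  [EnoughProjectives C] {X : C} (P : ProjectiveResolution X)

variable (A) in
/-- The complex `Hom(P, Y)`, regarded as a chain complex in the opposite category. -/
abbrev homComplexOp (Y : C) : ChainComplex (ModuleCat A)ᵒᵖ ℕ :=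
  (((linearYoneda A C).obj Y).rightOp.mapHomologicalComplex _).obj P.complex

variable (A) in
/-- The left derived functor computing `Extⁿ(X, Y)` is the homology of `P.homComplexOp A Y`. -/
def isoHomologyHomComplexOp (n : ℕ) (Y : C) :
    (((linearYoneda A C).obj Y).rightOp.leftDerived n).obj X ≅ (P.homComplexOp A Y).homology n :=
  P.isoLeftDerivedObj ((linearYoneda A C).obj Y).rightOp n

variable (A) in
/-- The canonical map from the `n`-cocycles of `Hom(P, Y)` to `Extⁿ(X, Y)`. -/
def cocyclesToExt (n : ℕ) (Y : C) :
    ((P.homComplexOp A Y).opcycles n).unop ⟶ ((Ext A C n).obj (op X)).obj Y :=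
  ((P.isoHomologyHomComplexOp A n Y).hom ≫ (P.homComplexOp A Y).homologyι n).unop

/-- `P.RepresentsExt e a` says that `a : Pₙ ⟶ Y` is a cocycle with class `e` in `Extⁿ(X, Y)`. -/
def RepresentsExt {n : ℕ} {Y : C} (e : ((Ext A C n).obj (op X)).obj Y)
    (a : P.complex.X n ⟶ Y) : Prop :=
  ∃ z : ((P.homComplexOp A Y).opcycles n).unop,
    ((P.homComplexOp A Y).pOpcycles n).unop.hom z = a ∧ (P.cocyclesToExt A n Y).hom z = e

instance (n : ℕ) (Y : C) : Epi (P.cocyclesToExt A n Y) :=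
  unop_epi_of_mono ((P.isoHomologyHomComplexOp A n Y).hom ≫ (P.homComplexOp A Y).homologyι n)

variable {P}

lemma exists_representsExt {n : ℕ} {Y : C} (e : ((Ext A C n).obj (op X)).obj Y) :
    ∃ a, P.RepresentsExt e a := by
  obtain ⟨z, hz⟩ := (ModuleCat.epi_iff_surjective (P.cocyclesToExt A n Y)).1 inferInstance e
  exact ⟨_, z, rfl, hz⟩

lemma RepresentsExt.zero {n : ℕ} {Y : C} :
    P.RepresentsExt (0 : ((Ext A C n).obj (op X)).obj Y) 0 :=
  ⟨0, map_zero _, map_zero _⟩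

lemma RepresentsExt.add {n : ℕ} {Y : C} {e e' : ((Ext A C n).obj (op X)).obj Y}
    {a a' : P.complex.X n ⟶ Y} (h : P.RepresentsExt e a) (h' : P.RepresentsExt e' a') :
    P.RepresentsExt (e + e') (a + a') := by
  obtain ⟨z, rfl, rfl⟩ := h
  obtain ⟨z', rfl, rfl⟩ := h'
  exact ⟨z + z', map_add _ _ _, map_add _ _ _⟩

lemma RepresentsExt.sub {n : ℕ} {Y : C} {e e' : ((Ext A C n).obj (op X)).obj Y}
    {a a' : P.complex.X n ⟶ Y} (h : P.RepresentsExt e a) (h' : P.RepresentsExt e' a') :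
    P.RepresentsExt (e - e') (a - a') := by
  obtain ⟨z, rfl, rfl⟩ := h
  obtain ⟨z', rfl, rfl⟩ := h'
  exact ⟨z - z', map_sub _ _ _, map_sub _ _ _⟩

lemma exists_ext_of_d_comp_eq_zero {n : ℕ} {Y : C} (a : P.complex.X n ⟶ Y)
    (ha : P.complex.d (n + 1) n ≫ a = 0) :
    ∃ e : ((Ext A C n).obj (op X)).obj Y, P.RepresentsExt e a := by
  let K := P.homComplexOp A Y
  have hex : (ShortComplex.mk (K.d (n + 1) n) (K.pOpcycles n) (by simp)).Exact :=
    ShortComplex.exact_of_g_is_cokernel _ (K.opcyclesIsCokernel (n + 1) n (by simp))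
  obtain ⟨z, hz⟩ := (ShortComplex.moduleCat_exact_iff _).1 hex.unop a ha
  exact ⟨_, z, hz, rfl⟩

lemma RepresentsExt.exists_eq_d_comp {n : ℕ} {Y : C} {a : P.complex.X (n + 1) ⟶ Y}
    (h : P.RepresentsExt (0 : ((Ext A C (n + 1)).obj (op X)).obj Y) a) :
    ∃ b, a = P.complex.d (n + 1) n ≫ b := by
  let K := P.homComplexOp A Y
  obtain ⟨z, rfl, hz⟩ := h
  let S := ShortComplex.mk ((P.isoHomologyHomComplexOp A (n + 1) Y).hom ≫ K.homologyι (n + 1))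
      (K.fromOpcycles (n + 1) n) (by simp)
  let T := ShortComplex.mk (K.homologyι (n + 1)) (K.fromOpcycles (n + 1) n) (by simp)
  let i : S ≅ T := ShortComplex.isoMk (P.isoHomologyHomComplexOp A (n + 1) Y)
    (Iso.refl _) (Iso.refl _) (by simp [S, T, K]) (by simp [S, T])
  have hex : S.Exact := (ShortComplex.exact_iff_of_iso i).2
    (ShortComplex.exact_of_f_is_kernel _ (K.homologyIsKernel (n + 1) n (by simp)))
  obtain ⟨b, hb⟩ := (ShortComplex.moduleCat_exact_iff _).1 hex.unop z hz
  refine ⟨b, ?_⟩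
  rw [← hb]
  have := K.p_fromOpcycles (n + 1) n
  exact congr($(this).unop.hom b)

lemma RepresentsExt.comp {n : ℕ} {Y Y' : C} {e : ((Ext A C n).obj (op X)).obj Y}
    {a : P.complex.X n ⟶ Y} (h : P.RepresentsExt e a) (f : Y ⟶ Y') :
    P.RepresentsExt (((Ext A C n).obj (op X)).map f e) (a ≫ f) := by
  obtain ⟨z, rfl, rfl⟩ := h
  let α := NatTrans.rightOp ((linearYoneda A C).map f)
  let φ := (NatTrans.mapHomologicalComplex α (ComplexShape.down ℕ)).app P.complex
  refine ⟨(HomologicalComplex.opcyclesMap φ n).unop.hom z, ?_, ?_⟩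
  · exact congr($(HomologicalComplex.p_opcyclesMap φ n).unop.hom z)
  · have h1 : ((Ext A C n).obj (op X)).map f =
      ((NatTrans.leftDerived α n).app X).unop := rfl
    have h2 : (NatTrans.leftDerived α n).app X = (P.isoHomologyHomComplexOp A n Y').hom ≫
        HomologicalComplex.homologyMap φ n ≫ (P.isoHomologyHomComplexOp A n Y).inv :=
      leftDerived_app_eq α P n
    have h3 : (NatTrans.leftDerived α n).app X ≫ (P.isoHomologyHomComplexOp A n Y).hom ≫
          (P.homComplexOp A Y).homologyι n = ((P.isoHomologyHomComplexOp A n Y').hom ≫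
          (P.homComplexOp A Y').homologyι n) ≫ HomologicalComplex.opcyclesMap φ n := by
      rw [h2]
      simp [φ]
    rw [h1]
    exact congr($(h3).unop.hom z).symm

end CategoryTheory.ProjectiveResolution

namespace ModuleCat

open DirectSum

universe u v
variable {S : Type u} [Ring S] {ι : Type v}

/-- If every map from `K` to a direct sum lands in a finite subsum, then `Hom(K, -)` commutes
with direct sums. -/
lemma preservesCoproducts_preadditiveCoyoneda_of_finite_support (K : ModuleCat.{v} S)
    (H : ∀ (Z : ι → ModuleCat.{v} S) (f : K →ₗ[S] ⨁ i, Z i),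
      ∃ s : Finset ι, ∀ i ∉ s, ∀ x, f x i = 0) :
    PreservesColimitsOfShape (Discrete ι) (preadditiveCoyoneda.obj (op K)) := by
  classical
  refine ⟨fun {F} => ?_⟩
  let Z : ι → ModuleCat.{v} S := fun i => F.obj ⟨i⟩
  suffices PreservesColimit (Discrete.functor Z) (preadditiveCoyoneda.obj (op K)) from
    preservesColimit_of_iso_diagram (K₁ := Discrete.functor Z) _ Discrete.natIsoFunctor.symm
  let π (i : ι) : of S (⨁ i, Z i) ⟶ Z i := ofHom (DirectSum.component S ι (fun i => Z i) i)
  let inc (i : ι) : Z i ⟶ of S (⨁ i, Z i) := ofHom (DirectSum.lof S ι (fun i => Z i) i)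
  have hinc_same (i : ι) : inc i ≫ π i = 𝟙 _ := by
    ext x
    exact DirectSum.component.lof_self S (M := fun i => Z i) i x
  have hinc_ne (i j : ι) (hij : i ≠ j) : inc i ≫ π j = 0 := by
    ext x
    exact DirectSum.of_eq_of_ne _ _ _ hij.symm
  have hfin (f : K ⟶ of S (⨁ i, Z i)) : ∃ s : Finset ι, ∀ i ∉ s, f ≫ π i = 0 := by
    obtain ⟨s, hs⟩ := H Z f.hom
    exact ⟨s, fun i hi => by ext x; exact hs i hi x⟩
  have hsum (f : K ⟶ of S (⨁ i, Z i)) (s : Finset ι) (hs : ∀ i ∉ s, f ≫ π i = 0) :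
      f = ∑ i ∈ s, (f ≫ π i) ≫ inc i := by
    refine hom_ext (LinearMap.ext fun x => DFinsupp.ext fun j => ?_)
    have key : f ≫ π j = (∑ i ∈ s, (f ≫ π i) ≫ inc i) ≫ π j := by
      rw [Preadditive.sum_comp]
      by_cases hj : j ∈ s
      · rw [Finset.sum_eq_single_of_mem j hj fun i _ hi => by simp [hinc_ne i j hi]]
        simp [hinc_same]
      · rw [Finset.sum_eq_zero fun i hi => by
          simp [hinc_ne i j (fun h => hj (h ▸ hi))], hs j hj]
    exact congr($(key).hom x)
  refine preservesColimit_of_preserves_colimit_cocone (coproductCoconeIsColimit Z) ?_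
  let t (s : Cocone (Discrete.functor Z ⋙ preadditiveCoyoneda.obj (op K))) (i : ι) :
      (K ⟶ Z i) →+ s.pt := (s.ι.app ⟨i⟩).hom
  have hfs (s : Cocone (Discrete.functor Z ⋙ preadditiveCoyoneda.obj (op K)))
      (f : K ⟶ of S (⨁ i, Z i)) : (Function.support fun i => t s i (f ≫ π i)).Finite := by
    obtain ⟨u, hu⟩ := hfin f
    refine u.finite_toSet.subset fun i hi => ?_
    by_contra h
    exact hi (by simp [hu i h])
  let d (s : Cocone (Discrete.functor Z ⋙ preadditiveCoyoneda.obj (op K))) :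
      (K ⟶ of S (⨁ i, Z i)) →+ s.pt :=
    { toFun f := ∑ᶠ i, t s i (f ≫ π i)
      map_zero' := by simp
      map_add' f g := by
        simp only [Preadditive.add_comp, map_add]
        exact finsum_add_distrib (hfs s f) (hfs s g) }
  have hd (s) (i : ι) (g : K ⟶ Z i) : d s (g ≫ inc i) = t s i g := by
    change ∑ᶠ j, t s j ((g ≫ inc i) ≫ π j) = _
    rw [finsum_eq_single _ i fun j hj => by simp [hinc_ne i j hj.symm]]
    simp [hinc_same]
  exact
    { desc s := AddCommGrpCat.ofHom (d s)
      fac s := by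
        rintro ⟨i⟩
        ext g
        exact hd s i g
      uniq s m hm := by
        ext f
        change (K ⟶ of S (⨁ i, Z i)) at f
        obtain ⟨u, hu⟩ := hfin f
        let m' : (K ⟶ of S (⨁ i, Z i)) →+ s.pt := m.hom
        have hm' (i : ι) (g : K ⟶ Z i) : m' (g ≫ inc i) = t s i g := congr($(hm ⟨i⟩).hom g)
        change m' f = d s f
        rw [hsum f u hu, map_sum, map_sum]
        exact Finset.sum_congr rfl fun i _ => (hm' i _).trans (hd s i _).symm }

/-- An additive property which holds on the images of all summands holds on a coproduct. -/
lemma cofan_induction {ι : Type*} {F : Discrete ι ⥤ ModuleCat.{v} S}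
    {c : Cocone F} (hc : IsColimit c) (p : c.pt → Prop) (h0 : p 0)
    (hadd : ∀ x y, p x → p y → p (x + y)) (hι : ∀ i x, p (c.ι.app i x)) (x : c.pt) : p x := by
  let g (i : Discrete ι) : F.obj i →ₗ[S] c.pt := (c.ι.app i).hom
  have htop : ⨆ i, LinearMap.range (g i) = ⊤ := by
    rw [← Submodule.ker_mkQ (⨆ i, LinearMap.range (g i)), LinearMap.ker_eq_top]
    refine congrArg Hom.hom (hc.hom_ext (f := ofHom (Submodule.mkQ _)) (f' := 0) fun i => ?_)
    ext y
    exact (Submodule.Quotient.mk_eq_zero _).2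
      (Submodule.mem_iSup_of_mem i (LinearMap.mem_range_self (g i) y))
  refine Submodule.iSup_induction _ (motive := p)
    (htop ▸ Submodule.mem_top : x ∈ ⨆ i, LinearMap.range (g i)) ?_ h0 hadd
  rintro i _ ⟨y, rfl⟩
  exact hι i y

end ModuleCat

open DirectSum in
/-- A map from a finitely generated module to a direct sum lands in a finite subsum. -/
lemma LinearMap.exists_finset_support_of_finite {S ι : Type*} [Ring S] {Z : ι → Type*}
    [∀ i, AddCommGroup (Z i)] [∀ i, Module S (Z i)] {F : Type*} [AddCommGroup F] [Module S F]
    [Module.Finite S F] (f : F →ₗ[S] ⨁ i, Z i) :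
    ∃ s : Finset ι, ∀ i ∉ s, ∀ x, f x i = 0 := by
  classical
  obtain ⟨T, hT⟩ := Module.Finite.fg_top (R := S) (M := F)
  refine ⟨T.biUnion fun t => DFinsupp.support (f t), fun i hi x => ?_⟩
  have hx : x ∈ Submodule.span S (T : Set F) := hT ▸ Submodule.mem_top
  have hle : Submodule.span S (T : Set F) ≤
      LinearMap.ker ((DirectSum.component S ι Z i).comp f) := by
    refine Submodule.span_le.2 fun t ht => ?_
    by_contra h
    exact hi (Finset.mem_biUnion.2 ⟨t, ht, DFinsupp.mem_support_iff.2 h⟩)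
  exact hle hx

open DirectSum ModuleCat in
/-- If `Ext¹(M, -)` commutes with direct sums, then every class in `Ext¹(M, ⨁ Z)` is represented
by a cocycle landing in a finite subsum. -/
lemma exists_representsExt_finite_support {R : Type} [Ring R] {M : RMod R}
    (h : CommutesWithDirectSums R M) (P : ProjectiveResolution M) {ι : Type} (Z : ι → RMod R)
    (e : (extFun R 1 M).obj (ModuleCat.of Rᵐᵒᵖ (⨁ i, Z i))) :
    ∃ a : P.complex.X 1 ⟶ ModuleCat.of Rᵐᵒᵖ (⨁ i, Z i), P.RepresentsExt e a ∧
      ∃ s : Finset ι, ∀ i ∉ s, ∀ x, (a.hom x : ⨁ i, Z i) i = 0 := by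
  classical
  have := h ι
  refine cofan_induction
    (isColimitOfPreserves (extFun R 1 M) (coproductCoconeIsColimit Z))
    (fun e => ∃ a : P.complex.X 1 ⟶ ModuleCat.of Rᵐᵒᵖ (⨁ i, Z i), P.RepresentsExt e a ∧
      ∃ s : Finset ι, ∀ i ∉ s, ∀ x, (a.hom x : ⨁ i, Z i) i = 0) ?_ ?_ ?_ e
  · exact ⟨0, .zero, ∅, fun i _ x => rfl⟩
  · rintro e e' ⟨a, ha, s, hs⟩ ⟨a', ha', s', hs'⟩
    refine ⟨a + a', ha.add ha', s ∪ s', fun i hi x => ?_⟩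
    rw [Finset.mem_union, not_or] at hi
    exact (congrArg₂ (· + ·) (hs i hi.1 x) (hs' i hi.2 x)).trans (add_zero 0)
  · rintro ⟨i⟩ e
    obtain ⟨a, ha⟩ := P.exists_representsExt e
    refine ⟨_, ha.comp ((coproductCocone Z).inj i), {i}, fun j hj x => ?_⟩
    exact DirectSum.of_eq_of_ne _ _ _ (Finset.notMem_singleton.1 hj)

open DirectSum in
/-- If `M` is finitely generated and `Ext¹(M, -)` commutes with direct sums, then the kernel of any
map from a finitely generated projective module onto `M` is small. -/
lemma isSmallModule_ker {R : Type} [Ring R] {M : RMod R} (h : CommutesWithDirectSums R M)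
    {F : Type} [AddCommGroup F] [Module Rᵐᵒᵖ F] [Module.Finite Rᵐᵒᵖ F] [Module.Projective Rᵐᵒᵖ F]
    (q : F →ₗ[Rᵐᵒᵖ] M) (hq : Function.Surjective q) :
    IsSmallModule R (ModuleCat.of Rᵐᵒᵖ (LinearMap.ker q)) := by
  classical
  intro ι
  refine ModuleCat.preservesCoproducts_preadditiveCoyoneda_of_finite_support _ fun Z f => ?_
  change LinearMap.ker q →ₗ[Rᵐᵒᵖ] ⨁ i, Z i at f
  let P := projectiveResolution M
  let P₀ := P.complex.X 0
  let P₁ := P.complex.X 1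
  let ε : P₀ →ₗ[Rᵐᵒᵖ] M := (P.π.f 0).hom
  let d : P₁ →ₗ[Rᵐᵒᵖ] P₀ := (P.complex.d 1 0).hom
  have hε : Function.Surjective ε := (ModuleCat.epi_iff_surjective (P.π.f 0)).1 inferInstance
  have hεd (x : P₁) : ε (d x) = 0 := congr($(P.complex_d_comp_π_f_zero).hom x)
  have hex (y : P₀) (hy : ε y = 0) : ∃ x, d x = y :=
    (ShortComplex.moduleCat_exact_iff _).1 P.exact₀ y hy
  have : Module.Projective Rᵐᵒᵖ P₀ :=
    (IsProjective.iff_projective _).2 (P.projective 0)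
  obtain ⟨φ, hφ⟩ := Module.projective_lifting_property q ε hq
  obtain ⟨ψ, hψ⟩ := Module.projective_lifting_property ε q hε
  replace hφ (y : P₀) : q (φ y) = ε y := congr($hφ y)
  replace hψ (x : F) : ε (ψ x) = q x := congr($hψ x)
  let φd : P₁ →ₗ[Rᵐᵒᵖ] LinearMap.ker q :=
    (φ.comp d).codRestrict _ fun x => by simp [hφ, hεd]
  let a : P.complex.X 1 ⟶ ModuleCat.of Rᵐᵒᵖ (⨁ i, Z i) := ModuleCat.ofHom (f.comp φd)
  have ha : P.complex.d 2 1 ≫ a = 0 := by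
    refine ModuleCat.hom_ext (LinearMap.ext fun x => ?_)
    have hx : d ((P.complex.d 2 1).hom x) = 0 := congr($(P.complex.d_comp_d 2 1 0).hom x)
    have hx' : φd ((P.complex.d 2 1).hom x) = 0 := Subtype.ext (by simp [φd, hx])
    exact (congrArg f hx').trans (map_zero f)
  obtain ⟨e, he⟩ := ProjectiveResolution.exists_ext_of_d_comp_eq_zero (A := ℤ) a ha
  obtain ⟨a', ha', s', hs'⟩ := exists_representsExt_finite_support h P Z e
  have hsub := he.sub ha'
  rw [sub_self] at hsub
  obtain ⟨b, hb⟩ := hsub.exists_eq_d_comp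
  let b' : P₀ →ₗ[Rᵐᵒᵖ] ⨁ i, Z i := b.hom
  let a'' : P₁ →ₗ[Rᵐᵒᵖ] ⨁ i, Z i := a'.hom
  have hab (x : P₁) : f (φd x) = b' (d x) + a'' x :=
    sub_eq_iff_eq_add.1 congr($(hb).hom x)
  let c : F →ₗ[Rᵐᵒᵖ] LinearMap.ker q :=
    (LinearMap.id - φ.comp ψ).codRestrict _ fun x => by simp [hφ, hψ]
  obtain ⟨s, hs⟩ := (f.comp c + b'.comp ψ).exists_finset_support_of_finite
  refine ⟨s ∪ s', fun i hi k => ?_⟩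
  rw [Finset.mem_union, not_or] at hi
  obtain ⟨x, hx⟩ := hex (ψ k) (by rw [hψ]; exact k.2)
  have hk : k = c k + φd x := Subtype.ext (by simp [c, φd, hx])
  have hfk : f k = (f.comp c + b'.comp ψ) k + a'' x := by
    conv_lhs => rw [hk, map_add, hab, hx]
    simp [add_assoc]
  have : f k i = (f.comp c + b'.comp ψ) k i + a'' x i := congr($hfk i)
  exact this.trans ((congrArg₂ (· + ·) (hs i hi.1 k) (hs' i hi.2 x)).trans (add_zero 0))

theorem fg_ext1_commutes_with_direct_sums_implies_smallOmega1
    (R : Type) [Ring R] (M : RMod R) (hfg : Module.Finite Rᵐᵒᵖ M)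
    (h : CommutesWithDirectSums R M) :
    IsOmega1 R (fun K => IsSmallModule R K) M := by
  obtain ⟨n, q, hq⟩ := Module.Finite.exists_fin' Rᵐᵒᵖ M
  refine ⟨ModuleCat.of _ (LinearMap.ker q), ModuleCat.of _ (Fin n → Rᵐᵒᵖ),
    ModuleCat.ofHom (LinearMap.ker q).subtype, ModuleCat.ofHom q, ?_, ?_, ?_, ?_, ?_,
    isSmallModule_ker h q hq⟩
  · ext x
    exact x.2
  · exact (ModuleCat.mono_iff_injective _).2 Subtype.val_injective
  · exact (ModuleCat.epi_iff_surjective _).2 hq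
  · exact (ShortComplex.moduleCat_exact_iff _).2 fun x hx => ⟨⟨x, hx⟩, rfl⟩
  · exact (IsProjective.iff_projective _).1 inferInstance
end
end
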